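/- For every integer d ≥ 2, the formal power series identity C^{d,2}(x) = C^d(x) + x^{d+2}/((1−2x)·F_{d+2}(x)) holds, i.e. (1−2x)·F_{d+2}(x)·(C^{d,2}(x) − C^d(x)) = x^{d+2}. Consequently, for all integers n,d ≥ 2, C^{d,2}_n = C^d_n + Σ_{i=1}^{n−d} 2^{i−1} Σ_α (−1)^{n−d−i−ℓ(α)} Π_{j=1}^{ℓ(α)} binom(d+1−α_j, α_j), where the inner sum is over all compositions α of n−d−i with max(α) ≤ (d+1)/2 (the empty composition of 0 contributing the empty product 1). -/

import Mathlib

/-- Full binary trees (every internal node has exactly two children). -/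
inductive BTree : Type
  | leaf : BTree
  | node : BTree → BTree → BTree
deriving DecidableEq

namespace BTree

/-- Number of leaves of a full binary tree. -/
def numLeaves : BTree → ℕ
  | leaf => 1
  | node l r => l.numLeaves + r.numLeaves

/-- The list of pairs (left depth, right depth) of the leaves, in preorder. -/
def leafDepths : BTree → List (ℕ × ℕ)
  | leaf => [(0, 0)]
  | node l r =>
      (l.leafDepths.map fun p => (p.1 + 1, p.2)) ++ (r.leafDepths.map fun p => (p.1, p.2 + 1))

/-- The left depth sequence `ld(t)` of the leaves of `t`, in preorder. -/
def ld (t : BTree) : List ℕ := t.leafDepths.map Prod.fst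

/-- The right depth sequence `rd(t)` of the leaves of `t`, in preorder. -/
def rd (t : BTree) : List ℕ := t.leafDepths.map Prod.snd

end BTree

/-- `b ~^d c` : the sequences have equal length and agree at every position where
either entry is `< d`. -/
def DepthEq (d : ℕ) : List ℕ → List ℕ → Prop :=
  List.Forall₂ (fun a b => min a b < d → a = b)

/-- `b ~_k c` : entrywise congruence mod `k` (and equal length). -/
def ModListEq (k : ℕ) : List ℕ → List ℕ → Prop :=
  List.Forall₂ (fun a b => a % k = b % k)

/-- The relation `t ~ t'` iff `ld(t) ~^d ld(t')` and `rd(t) ~^e rd(t')`. -/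
def DeRel (d e : ℕ) (t t' : BTree) : Prop :=
  DepthEq d t.ld t'.ld ∧ DepthEq e t.rd t'.rd

/-- The relation `t ~ t'` iff `ld(t) ~_k^d ld(t')` (i.e. `ld(t) ~_k ld(t')` and
`ld(t) ~^d ld(t')`). -/
def DkRel (d k : ℕ) (t t' : BTree) : Prop :=
  ModListEq k t.ld t'.ld ∧ DepthEq d t.ld t'.ld

/-- `T_n`: full binary trees with `n+1` leaves. -/
def Tn (n : ℕ) : Type := {t : BTree // t.numLeaves = n + 1}

/-- `C^{d,e}_n`: the number of equivalence classes of the relation `DeRel d e` on `T_n`. -/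
noncomputable def Cde (d e n : ℕ) : ℕ :=
  Nat.card (Quot (fun t t' : Tn n => DeRel d e t.1 t'.1))

/-- `C^d_{k,n}`: the number of equivalence classes of `ld(t) ~_k^d ld(t')` on `T_n`. -/
noncomputable def Cdk (d k n : ℕ) : ℕ :=
  Nat.card (Quot (fun t t' : Tn n => DkRel d k t.1 t'.1))

/-- Fibonacci polynomials (as formal power series): `F_0 = 0`, `F_1 = 1`, and
`F_n = F_{n-1} - x·F_{n-2}` for `n ≥ 2`. -/
noncomputable def FibP : ℕ → PowerSeries ℚ
  | 0 => 0
  | 1 => 1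
  | n + 2 => FibP (n + 1) - PowerSeries.X * FibP n

/-- Generating function `C^{d,e}(x) = Σ_{n≥0} C^{d,e}_n x^{n+1}`, with the convention that
a superscript parameter equal to `0` is interpreted as `1`. -/
noncomputable def CdeX (d e : ℕ) : PowerSeries ℚ :=
  PowerSeries.mk fun m => match m with
    | 0 => 0
    | n + 1 => (Cde (max d 1) (max e 1) n : ℚ)

/-!
The last leaf of the left subtree is the first leaf of left depth `1`, so for `d ≥ 1` the class of
a tree under `DeRel (d + 1) (e + 1)` determines where its left subtree ends, hence the classes of
both subtrees: `C^{d+1,e+1} = x + C^{d,e+1} C^{d+1,e}`. Truncating depths at level `0` or at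
level `1` loses the same information, so the case `e = 0` is the recurrence
`C^{d+1} = x + C^d C^{d+1}`, solved by `C^d = x F_{d+1} / F_{d+2}`. Subtracting it from the case
`e = 1` gives `C^{d+1,2} - C^{d+1} = (C^{d,2} - C^d) C^{d+1}`, and induction on `d` starts from
`C^{1,2} = C^2`, the mirror symmetry. The explicit formula expands `1 / (1 - 2x)` as a geometric
series and `1 / F_{d+2}` as a sum over compositions.
-/

theorem idxOf_map_of_injective {α β : Type*} [DecidableEq α] [DecidableEq β] {f : α → β}
    (hf : Function.Injective f) (a : α) (l : List α) : (l.map f).idxOf (f a) = l.idxOf a := by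
  induction l with
  | nil => rfl
  | cons b l ih =>
    simp only [List.map_cons, List.idxOf_cons, ih, beq_iff_eq, hf.eq_iff, Bool.cond_eq_ite]

section DepthEq

variable {d k : ℕ} {b b' c c' : List ℕ}

theorem depthEq_iff_map_min_eq : DepthEq d b c ↔ b.map (min · d) = c.map (min · d) := by
  have agree_iff (x y : ℕ) : (min x y < d → x = y) ↔ min x d = min y d := by omega
  simp only [DepthEq, agree_iff, ← List.forall₂_eq_eq_eq, List.forall₂_map_left_iff,
    List.forall₂_map_right_iff]

theorem depthEq_zero_iff : DepthEq 0 b c ↔ b.length = c.length := by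
  simp [DepthEq, List.forall₂_iff_get]

theorem depthEq_append_iff (h : b.length = b'.length) :
    DepthEq d (b ++ c) (b' ++ c') ↔ DepthEq d b b' ∧ DepthEq d c c' := by
  simp only [depthEq_iff_map_min_eq, List.map_append]
  exact ⟨fun hbc ↦ List.append_inj hbc (by simpa using h), fun hbc ↦ by rw [hbc.1, hbc.2]⟩

theorem depthEq_succ_map_succ_iff :
    DepthEq (d + 1) (b.map Nat.succ) (c.map Nat.succ) ↔ DepthEq d b c := by
  simp [DepthEq, List.forall₂_map_left_iff, List.forall₂_map_right_iff]

theorem DepthEq.idxOf_eq (h : DepthEq d b c) (hk : k < d) : b.idxOf k = c.idxOf k := by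
  induction h with
  | nil => rfl
  | @cons x y b c hxy _ ih =>
    have head_iff : x = k ↔ y = k := by omega
    simp only [List.idxOf_cons, beq_iff_eq, head_iff, ih, Bool.cond_eq_ite]

end DepthEq

section DeRel

theorem deRel_iff_map_min_eq {d e : ℕ} {t t' : BTree} :
    DeRel d e t t' ↔ (t.ld.map (min · d), t.rd.map (min · e)) =
      (t'.ld.map (min · d), t'.rd.map (min · e)) := by
  rw [DeRel, depthEq_iff_map_min_eq, depthEq_iff_map_min_eq, Prod.mk.injEq]

namespace BTree

theorem numLeaves_pos (t : BTree) : 0 < t.numLeaves := by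
  induction t with
  | leaf => exact Nat.one_pos
  | node l r hl _ => exact Nat.add_pos_left hl _

theorem ld_node (l r : BTree) : (node l r).ld = l.ld.map Nat.succ ++ r.ld := by
  simp [ld, leafDepths, Function.comp_def]

theorem rd_node (l r : BTree) : (node l r).rd = l.rd ++ r.rd.map Nat.succ := by
  simp [rd, leafDepths, Function.comp_def]

theorem length_ld (t : BTree) : t.ld.length = t.numLeaves := by
  induction t with
  | leaf => rfl
  | node l r hl hr => simp [ld_node, numLeaves, hl, hr]

theorem length_rd (t : BTree) : t.rd.length = t.numLeaves := by
  rw [rd, ← length_ld, ld, List.length_map, List.length_map]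

theorem zero_mem_ld (t : BTree) : 0 ∈ t.ld := by
  induction t with
  | leaf => simp [ld, leafDepths]
  | node l r _ hr => simp [ld_node, hr]

theorem idxOf_zero_ld (t : BTree) : t.ld.idxOf 0 + 1 = t.numLeaves := by
  induction t with
  | leaf => rfl
  | node l r _ hr =>
    rw [ld_node, List.idxOf_append_of_notMem (by simp), List.length_map, length_ld, add_assoc, hr,
      numLeaves]

theorem idxOf_one_ld_node (l r : BTree) : (node l r).ld.idxOf 1 + 1 = l.numLeaves := by
  rw [ld_node, List.idxOf_append_of_mem (by simpa using zero_mem_ld l),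
    idxOf_map_of_injective Nat.succ_injective 0, idxOf_zero_ld]

theorem map_min_one_rd (t : BTree) :
    t.rd.map (min · 1) = 0 :: List.replicate (t.numLeaves - 1) 1 := by
  induction t with
  | leaf => rfl
  | node l r hl _ =>
    have right_positive : (r.rd.map Nat.succ).map (min · 1) = List.replicate r.numLeaves 1 := by
      simp [List.eq_replicate_iff, length_rd]
    rw [rd_node, List.map_append, hl, right_positive, List.cons_append,
      List.replicate_append_replicate, numLeaves, Nat.sub_add_comm l.numLeaves_pos]

/-- The mirror image of a tree; it exchanges left and right depths. -/
def mirror : BTree → BTree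
  | leaf => leaf
  | node l r => node r.mirror l.mirror

theorem mirror_involutive : Function.Involutive mirror := fun t ↦ by
  induction t with
  | leaf => rfl
  | node l r hl hr => rw [mirror, mirror, hl, hr]

theorem numLeaves_mirror (t : BTree) : t.mirror.numLeaves = t.numLeaves := by
  induction t with
  | leaf => rfl
  | node l r hl hr => rw [mirror, numLeaves, hl, hr, add_comm, numLeaves]

theorem ld_mirror (t : BTree) : t.mirror.ld = t.rd.reverse := by
  induction t with
  | leaf => rfl
  | node l r hl hr => simp [mirror, ld_node, rd_node, hl, hr]

theorem rd_mirror (t : BTree) : t.mirror.rd = t.ld.reverse := by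
  rw [← List.reverse_reverse t.mirror.rd, ← ld_mirror, mirror_involutive]

end BTree

open BTree

variable {d e : ℕ} {t t' l l' r r' : BTree}

theorem deRel_mirror_iff : DeRel d e t.mirror t'.mirror ↔ DeRel e d t t' := by
  simp only [DeRel, DepthEq, ld_mirror, rd_mirror, List.forall₂_reverse_iff, and_comm]

theorem DeRel.numLeaves_eq (h : DeRel d e t t') : t.numLeaves = t'.numLeaves := by
  rw [← length_ld, ← length_ld, h.1.length_eq]

theorem deRel_one_right_iff : DeRel d 1 t t' ↔ DeRel d 0 t t' := by
  refine and_congr_right fun h ↦ ?_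
  have leaves_eq : t.numLeaves = t'.numLeaves := by rw [← length_ld, ← length_ld, h.length_eq]
  simp only [depthEq_iff_map_min_eq (d := 1), depthEq_zero_iff, map_min_one_rd, length_rd,
    leaves_eq]

theorem deRel_one_left_iff : DeRel 1 e t t' ↔ DeRel 0 e t t' := by
  rw [← deRel_mirror_iff, deRel_one_right_iff, deRel_mirror_iff]

theorem deRel_zero_zero_iff : DeRel 0 0 t t' ↔ t.numLeaves = t'.numLeaves := by
  simp only [DeRel, depthEq_zero_iff, length_ld, length_rd, and_self]

theorem deRel_node_iff_of_numLeaves_eq (h : l.numLeaves = l'.numLeaves) :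
    DeRel (d + 1) (e + 1) (node l r) (node l' r') ↔
      DeRel d (e + 1) l l' ∧ DeRel (d + 1) e r r' := by
  simp only [DeRel, ld_node, rd_node]
  rw [depthEq_append_iff (by simpa [length_ld] using h),
    depthEq_append_iff (by simpa [length_rd] using h),
    depthEq_succ_map_succ_iff, depthEq_succ_map_succ_iff, and_and_and_comm]

theorem DeRel.node (hl : DeRel d (e + 1) l l') (hr : DeRel (d + 1) e r r') :
    DeRel (d + 1) (e + 1) (node l r) (node l' r') :=
  (deRel_node_iff_of_numLeaves_eq hl.numLeaves_eq).2 ⟨hl, hr⟩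

theorem deRel_node_iff (hd : 1 ≤ d) :
    DeRel (d + 1) (e + 1) (node l r) (node l' r') ↔
      DeRel d (e + 1) l l' ∧ DeRel (d + 1) e r r' := by
  refine ⟨fun h ↦ (deRel_node_iff_of_numLeaves_eq ?_).1 h, fun h ↦ h.1.node h.2⟩
  rw [← idxOf_one_ld_node l r, ← idxOf_one_ld_node l' r', h.1.idxOf_eq (Nat.lt_add_of_pos_left hd)]

end DeRel

section Cde

open Finset

/-- The relation counted by `Cde d e n`, as an equivalence relation on `Tn n`. -/
def deSetoid (d e n : ℕ) : Setoid (Tn n) where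
  r t t' := DeRel d e t.1 t'.1
  iseqv := by
    simp only [deRel_iff_map_min_eq]
    exact ⟨fun _ ↦ rfl, Eq.symm, Eq.trans⟩

theorem cde_eq_card_quotient (d e n : ℕ) : Cde d e n = Nat.card (Quotient (deSetoid d e n)) :=
  rfl

theorem cde_congr {d e d' e' n : ℕ} (h : ∀ t t', DeRel d e t t' ↔ DeRel d' e' t t') :
    Cde d e n = Cde d' e' n := by
  simp only [Cde, h]

theorem cde_max_one (d e n : ℕ) : Cde (max d 1) (max e 1) n = Cde d e n := by
  refine cde_congr fun t t' ↦ ?_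
  rcases d with _ | d <;> rcases e with _ | e <;>
    simp [deRel_one_left_iff, deRel_one_right_iff]

namespace Tn

/-- Mirror images, as a permutation of `Tn n`. -/
def mirrorEquiv (n : ℕ) : Tn n ≃ Tn n :=
  BTree.mirror_involutive.toPerm.subtypeEquiv fun t ↦ by
    simp only [Function.Involutive.coe_toPerm, BTree.numLeaves_mirror]

/-- The tree with left subtree `l` and right subtree `r`. The subtrees have `p.1 + 1` and `p.2 + 1`
leaves where `p` is an element of the antidiagonal of `n`. -/
def node {n : ℕ} (p : antidiagonal n) (l : Tn p.1.1) (r : Tn p.1.2) : Tn (n + 1) :=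
  ⟨.node l.1 r.1, by
    have hp := mem_antidiagonal.1 p.2
    rw [BTree.numLeaves, l.2, r.2]
    omega⟩

theorem exists_eq_node {n : ℕ} (t : Tn (n + 1)) : ∃ p l r, t = node p l r := by
  obtain ⟨_ | ⟨l, r⟩, ht⟩ := t
  · simp [BTree.numLeaves] at ht
  · have hl := l.numLeaves_pos
    have hr := r.numLeaves_pos
    rw [BTree.numLeaves] at ht
    exact ⟨⟨(l.numLeaves - 1, r.numLeaves - 1), mem_antidiagonal.2 (by omega)⟩,
      ⟨l, (Nat.sub_add_cancel hl).symm⟩, ⟨r, (Nat.sub_add_cancel hr).symm⟩, rfl⟩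

instance : Unique (Tn 0) where
  default := ⟨.leaf, rfl⟩
  uniq := by
    rintro ⟨_ | ⟨l, r⟩, ht⟩
    · rfl
    · have hl := l.numLeaves_pos
      have hr := r.numLeaves_pos
      rw [BTree.numLeaves] at ht
      omega

instance instNonempty (n : ℕ) : Nonempty (Tn n) := by
  induction n with
  | zero => infer_instance
  | succ n ih => exact ih.map (node ⟨(0, n), by simp⟩ default)

instance instFinite (n : ℕ) : Finite (Tn n) := by
  induction n using Nat.strong_induction_on with
  | _ n ih =>
    cases n with
    | zero => infer_instance
    | succ n =>
      have (p : antidiagonal n) : Finite (Tn p.1.1 × Tn p.1.2) := by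
        have := ih _ (Nat.antidiagonal.fst_lt p.2)
        have := ih _ (Nat.antidiagonal.snd_lt p.2)
        infer_instance
      refine Finite.of_surjective
        (fun x : Σ p : antidiagonal n, Tn p.1.1 × Tn p.1.2 ↦ node x.1 x.2.1 x.2.2) fun t ↦ ?_
      obtain ⟨p, l, r, rfl⟩ := t.exists_eq_node
      exact ⟨⟨p, l, r⟩, rfl⟩

end Tn

theorem cde_comm (d e n : ℕ) : Cde d e n = Cde e d n :=
  Nat.card_congr <| Quot.congr (Tn.mirrorEquiv n) fun _ _ ↦ deRel_mirror_iff.symm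

theorem cde_zero_right (d e : ℕ) : Cde d e 0 = 1 := by
  rw [cde_eq_card_quotient, Nat.card_unique]

theorem cde_one_one (n : ℕ) : Cde 1 1 n = 1 := by
  have all_related (t t' : Tn n) : DeRel 0 0 t.1 t'.1 :=
    deRel_zero_zero_iff.2 (t.2.trans t'.2.symm)
  have : Nonempty (Quotient (deSetoid 0 0 n)) := (Tn.instNonempty n).map (Quotient.mk _)
  have : Subsingleton (Quotient (deSetoid 0 0 n)) :=
    ⟨Quotient.ind₂ fun t t' ↦ Quotient.sound (all_related t t')⟩
  exact (cde_max_one 0 0 n).trans (Nat.card_unique (α := Quotient (deSetoid 0 0 n)))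

/-- The map induced by `Tn.node` on equivalence classes. -/
def nodeClass (d e n : ℕ) (x : Σ p : antidiagonal n,
      Quotient (deSetoid d (e + 1) p.1.1) × Quotient (deSetoid (d + 1) e p.1.2)) :
    Quotient (deSetoid (d + 1) (e + 1) (n + 1)) :=
  Quotient.map₂ (Tn.node x.1) (fun _ _ hl _ _ hr ↦ DeRel.node hl hr) x.2.1 x.2.2

theorem nodeClass_bijective (d e n : ℕ) (hd : 1 ≤ d) :
    Function.Bijective (nodeClass d e n) := by
  constructor
  · rintro ⟨p, ⟨l⟩, ⟨r⟩⟩ ⟨p', ⟨l'⟩, ⟨r'⟩⟩ h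
    obtain ⟨hl, hr⟩ := (deRel_node_iff hd).1 (Quotient.exact h)
    have hp : p = p' := Subtype.ext <| Prod.ext
      (Nat.succ_injective (l.2.symm.trans (hl.numLeaves_eq.trans l'.2)))
      (Nat.succ_injective (r.2.symm.trans (hr.numLeaves_eq.trans r'.2)))
    subst hp
    exact Sigma.ext rfl (heq_of_eq (Prod.ext (Quotient.sound hl) (Quotient.sound hr)))
  · rintro ⟨t⟩
    obtain ⟨p, l, r, rfl⟩ := t.exists_eq_node
    exact ⟨⟨p, ⟦l⟧, ⟦r⟧⟩, rfl⟩

theorem cde_succ_succ_succ (d e n : ℕ) (hd : 1 ≤ d) :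
    Cde (d + 1) (e + 1) (n + 1) =
      ∑ p ∈ antidiagonal n, Cde d (e + 1) p.1 * Cde (d + 1) e p.2 := by
  rw [cde_eq_card_quotient, ← Nat.card_congr (.ofBijective _ (nodeClass_bijective d e n hd)),
    Nat.card_sigma]
  simp only [Nat.card_prod, ← cde_eq_card_quotient]
  exact sum_coe_sort (antidiagonal n) fun p ↦ Cde d (e + 1) p.1 * Cde (d + 1) e p.2

end Cde

section GeneratingFunction

open PowerSeries

theorem cdeX_eq_X_mul (d e : ℕ) : CdeX d e = X * mk fun n ↦ (Cde d e n : ℚ) := by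
  ext (_ | n)
  · simp [CdeX]
  · simp [CdeX, coeff_succ_X_mul, cde_max_one]

theorem cdeX_comm (d e : ℕ) : CdeX d e = CdeX e d := by
  simp only [cdeX_eq_X_mul, cde_comm d e]

theorem one_sub_X_mul_cdeX_one_one : (1 - X) * CdeX 1 1 = X := by
  have all_ones : (mk fun n ↦ (Cde 1 1 n : ℚ)) = mk 1 := by
    ext n
    simp [cde_one_one]
  rw [cdeX_eq_X_mul, all_ones, mul_left_comm, mul_comm (1 - X), mk_one_mul_one_sub_eq_one, mul_one]

theorem cdeX_succ_succ (d e : ℕ) (hd : 1 ≤ d) :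
    CdeX (d + 1) (e + 1) = X + CdeX d (e + 1) * CdeX (d + 1) e := by
  have recurrence : (mk fun n ↦ (Cde (d + 1) (e + 1) n : ℚ)) =
      1 + X * ((mk fun n ↦ (Cde d (e + 1) n : ℚ)) * mk fun n ↦ (Cde (d + 1) e n : ℚ)) := by
    ext (_ | n)
    · simp [cde_zero_right]
    · rw [map_add, coeff_succ_X_mul, coeff_mul]
      simp [coeff_one, cde_succ_succ_succ d e n hd]
  rw [cdeX_eq_X_mul, recurrence, cdeX_eq_X_mul d, cdeX_eq_X_mul (d + 1)]
  ring

theorem cdeX_succ_one (d : ℕ) (hd : 1 ≤ d) :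
    CdeX (d + 1) 1 = X + CdeX d 1 * CdeX (d + 1) 1 :=
  cdeX_succ_succ d 0 hd

theorem fibP_add_two (n : ℕ) : FibP (n + 2) = FibP (n + 1) - X * FibP n := by
  rw [FibP]

theorem fibP_two : FibP 2 = 1 := by
  simp [FibP]

theorem fibP_three : FibP 3 = 1 - X := by
  simp [FibP]

theorem fibP_mul_cdeX_one (d : ℕ) (hd : 1 ≤ d) : FibP (d + 2) * CdeX d 1 = X * FibP (d + 1) := by
  induction d, hd using Nat.le_induction with
  | base => rw [fibP_three, fibP_two, one_sub_X_mul_cdeX_one_one, mul_one]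
  | succ d hd ih =>
    linear_combination CdeX (d + 1) 1 * fibP_add_two (d + 1) + CdeX (d + 1) 1 * ih +
      FibP (d + 2) * cdeX_succ_one d hd

theorem cdeX_sub_succ (d : ℕ) (hd : 1 ≤ d) :
    CdeX (d + 1) 2 - CdeX (d + 1) 1 = (CdeX d 2 - CdeX d 1) * CdeX (d + 1) 1 := by
  linear_combination cdeX_succ_succ d 1 hd - cdeX_succ_one d hd

theorem fibP_mul_cdeX_sub (d : ℕ) (hd : 1 ≤ d) :
    (1 - 2 * X) * FibP (d + 2) * (CdeX d 2 - CdeX d 1) = X ^ (d + 2) := by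
  induction d, hd using Nat.le_induction with
  | base =>
    have hC : (1 - 2 * X) * CdeX 2 1 = X * (1 - X) := by
      linear_combination fibP_mul_cdeX_one 2 one_le_two - CdeX 2 1 * fibP_add_two 2
        - (CdeX 2 1 - X) * fibP_three + X * CdeX 2 1 * fibP_two
    rw [fibP_three, cdeX_comm 1 2]
    linear_combination (1 - X) * hC - (1 - 2 * X) * one_sub_X_mul_cdeX_one_one
  | succ d hd ih =>
    rw [cdeX_sub_succ d hd]
    linear_combination (1 - 2 * X) * (CdeX d 2 - CdeX d 1) *
      fibP_mul_cdeX_one (d + 1) (Nat.le_add_left 1 d) + X * ih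

theorem constantCoeff_fibP_succ (n : ℕ) : constantCoeff (FibP (n + 1)) = 1 := by
  induction n using Nat.twoStepInduction with
  | zero => simp [FibP]
  | one => simp [FibP]
  | more n _ ih => rw [fibP_add_two, map_sub, ih]; simp

theorem mk_pow_mul_one_sub_C_mul_X {R : Type*} [CommRing R] (a : R) :
    (mk (a ^ ·)) * (1 - C a * X) = 1 := by
  have := congrArg (rescale a) (mk_one_mul_one_sub_eq_one R)
  simpa [rescale_mk, rescale_X] using this

theorem cdeX_two_eq (d : ℕ) (hd : 1 ≤ d) :
    CdeX d 2 = CdeX d 1 + X ^ (d + 2) * (mk ((2 : ℚ) ^ ·) * (FibP (d + 2))⁻¹) := by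
  have geom : mk ((2 : ℚ) ^ ·) * (1 - 2 * X) = 1 := mk_pow_mul_one_sub_C_mul_X 2
  have hF : FibP (d + 2) * (FibP (d + 2))⁻¹ = 1 := PowerSeries.mul_inv_cancel _ <| by
    simp [constantCoeff_fibP_succ]
  linear_combination (mk ((2 : ℚ) ^ ·) * (FibP (d + 2))⁻¹) * fibP_mul_cdeX_sub d hd
    - (CdeX d 2 - CdeX d 1) * ((1 - 2 * X) * mk ((2 : ℚ) ^ ·) * hF + geom)

end GeneratingFunction

section Composition

open Finset PowerSeries

variable {R : Type*}

/-- The composition of `n + 1` with first part `p.1 + 1` followed by the parts of `β`, where `p` is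
an element of the antidiagonal of `n`. -/
def consComposition {n : ℕ} (p : antidiagonal n) (β : Composition p.1.2) : Composition (n + 1) :=
  ((Composition.single (p.1.1 + 1) p.1.1.succ_pos).append β).cast <| by
    rw [Nat.add_right_comm, mem_antidiagonal.1 p.2]

theorem blocks_consComposition {n : ℕ} (p : antidiagonal n) (β : Composition p.1.2) :
    (consComposition p β).blocks = (p.1.1 + 1) :: β.blocks :=
  rfl

theorem consComposition_bijective (n : ℕ) : Function.Bijective
    fun x : Σ p : antidiagonal n, Composition p.1.2 ↦ consComposition x.1 x.2 := by
  constructor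
  · rintro ⟨p, β⟩ ⟨p', β'⟩ h
    obtain ⟨ha, hβ⟩ := List.cons.inj (congrArg Composition.blocks h)
    have hb : p.1.2 = p'.1.2 := β.blocks_sum.symm.trans ((congrArg List.sum hβ).trans β'.blocks_sum)
    obtain rfl : p = p' := Subtype.ext (Prod.ext (Nat.succ_injective ha) hb)
    exact Sigma.ext rfl (heq_of_eq (Composition.ext hβ))
  · rintro ⟨_ | ⟨a, l⟩, blocks_pos, blocks_sum⟩
    · simp at blocks_sum
    · have ha : 0 < a := blocks_pos List.mem_cons_self
      rw [List.sum_cons] at blocks_sum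
      refine ⟨⟨⟨(a - 1, l.sum), mem_antidiagonal.2 (by omega)⟩,
        ⟨l, fun hi ↦ blocks_pos (List.mem_cons_of_mem _ hi), rfl⟩⟩, Composition.ext ?_⟩
      rw [blocks_consComposition, Nat.sub_add_cancel ha]

theorem sum_composition_zero [Semiring R] (f : ℕ → R) :
    ∑ α : Composition 0, (α.blocks.map f).prod = 1 := by
  simp [(Composition.blocks_eq_nil _).2 rfl, composition_card]

theorem sum_composition_succ [Semiring R] (f : ℕ → R) (n : ℕ) :
    ∑ α : Composition (n + 1), (α.blocks.map f).prod =
      ∑ p ∈ antidiagonal n, f (p.1 + 1) * ∑ β : Composition p.2, (β.blocks.map f).prod := by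
  rw [← (consComposition_bijective n).sum_comp, Fintype.sum_sigma]
  simp only [blocks_consComposition, List.map_cons, List.prod_cons, ← mul_sum]
  exact sum_coe_sort (antidiagonal n)
    fun p ↦ f (p.1 + 1) * ∑ β : Composition p.2, (β.blocks.map f).prod

theorem mul_mk_sum_composition [Ring R] (F : R⟦X⟧) (hF : constantCoeff F = 1) :
    F * mk (fun n ↦ ∑ α : Composition n, (α.blocks.map fun a ↦ -coeff a F).prod) = 1 := by
  ext (_ | n)
  · simp [hF, sum_composition_zero]
  · simp [coeff_mul, Nat.sum_antidiagonal_succ, hF, sum_composition_succ, coeff_one]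

theorem coeff_inv_eq_sum_composition {k : Type*} [Field k] (F : k⟦X⟧) (hF : constantCoeff F = 1)
    (n : ℕ) : coeff n F⁻¹ = ∑ α : Composition n, (α.blocks.map fun a ↦ -coeff a F).prod := by
  have hF' : constantCoeff F ≠ 0 := hF ▸ one_ne_zero
  rw [(PowerSeries.inv_eq_iff_mul_eq_one hF').2 (mul_comm F _ ▸ mul_mk_sum_composition F hF),
    coeff_mk]

end Composition

section ExplicitFormula

open Finset PowerSeries

theorem coeff_fibP_succ (k i : ℕ) :
    coeff i (FibP (k + 1)) = (-1 : ℚ) ^ i * (k - i).choose i := by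
  induction k using Nat.twoStepInduction generalizing i with
  | zero => cases i <;> simp [FibP, coeff_one]
  | one => rcases i with _ | _ | i <;> simp [FibP, coeff_one]
  | more k ih ih' =>
    rw [fibP_add_two, map_sub]
    cases i with
    | zero => simp [ih']
    | succ i =>
      have pascal : (k + 2 - (i + 1)).choose (i + 1) =
          (k + 1 - (i + 1)).choose (i + 1) + (k - i).choose i := by
        rcases le_or_gt i k with h | h
        · rw [show k + 2 - (i + 1) = (k - i) + 1 by omega, Nat.add_sub_add_right,
            Nat.choose_succ_succ, add_comm]
        · simp [Nat.choose_eq_zero_of_lt, show k + 2 - (i + 1) = 0 by omega,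
            show k - i = 0 by omega, Nat.choose_eq_zero_of_lt (show 0 < i by omega)]
      rw [coeff_succ_X_mul, ih, ih', pascal]
      push_cast
      ring

theorem prod_map_neg_neg_one_pow_mul {R : Type*} [CommRing R] (f : ℕ → R) (l : List ℕ) :
    (l.map fun a ↦ -((-1) ^ a * f a)).prod = (-1) ^ (l.sum + l.length) * (l.map f).prod := by
  induction l with
  | nil => simp
  | cons a l ih =>
    simp only [List.map_cons, List.prod_cons, ih, List.sum_cons, List.length_cons]
    ring

theorem prod_map_choose_eq_zero {R : Type*} [Semiring R] {m a : ℕ} {l : List ℕ} (ha : a ∈ l)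
    (hma : m < 2 * a) : (l.map fun a ↦ ((m - a).choose a : R)).prod = 0 :=
  List.prod_eq_zero <| List.mem_map.2
    ⟨a, ha, by rw [Nat.choose_eq_zero_of_lt (by omega), Nat.cast_zero]⟩

theorem coeff_inv_fibP (d m : ℕ) :
    coeff m (FibP (d + 2))⁻¹ =
      ∑ α ∈ univ.filter (fun α : Composition m ↦ ∀ a ∈ α.blocks, 2 * a ≤ d + 1),
        (-1 : ℚ) ^ (m - α.length) * (α.blocks.map fun a ↦ ((d + 1 - a).choose a : ℚ)).prod := by
  rw [coeff_inv_eq_sum_composition _ (constantCoeff_fibP_succ _), sum_filter]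
  refine sum_congr rfl fun α _ ↦ ?_
  have sign : (-1 : ℚ) ^ (m + α.length) = (-1) ^ (m - α.length) :=
    neg_one_pow_congr (by rw [Nat.even_add, Nat.even_sub α.length_le])
  simp only [coeff_fibP_succ (d + 1)]
  rw [prod_map_neg_neg_one_pow_mul, α.blocks_sum, α.blocks_length, sign]
  split_ifs with h
  · rfl
  · push Not at h
    obtain ⟨a, ha, hda⟩ := h
    rw [prod_map_choose_eq_zero ha hda, mul_zero]

theorem coeff_X_pow_succ_mul_mk_mul {R : Type*} [Semiring R] (k m : ℕ) (f : ℕ → R) (G : R⟦X⟧) :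
    coeff m (X ^ (k + 1) * (PowerSeries.mk f * G)) =
      ∑ i ∈ Icc 1 (m - k), f (i - 1) * coeff (m - k - i) G := by
  rw [coeff_X_pow_mul']
  split_ifs with hkm
  · obtain ⟨j, rfl⟩ := Nat.exists_eq_add_of_le hkm
    rw [Nat.add_sub_cancel_left, coeff_mul,
      Nat.sum_antidiagonal_eq_sum_range_succ fun a b ↦ coeff a (PowerSeries.mk f) * coeff b G,
      show k + 1 + j - k = j + 1 by omega, ← Ico_add_one_right_eq_Icc, sum_Ico_eq_sum_range]
    refine sum_congr rfl fun i _ ↦ ?_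
    rw [coeff_mk, Nat.add_sub_cancel_left, add_comm 1 i, Nat.add_sub_add_right]
  · simp [show m - k = 0 by omega]

theorem cde_two_eq (d n : ℕ) (hd : 1 ≤ d) :
    (Cde d 2 n : ℚ) = Cde d 1 n +
      ∑ i ∈ Icc 1 (n - d), 2 ^ (i - 1) * coeff (n - d - i) (FibP (d + 2))⁻¹ := by
  have h := congrArg (coeff (n + 1)) (cdeX_two_eq d hd)
  rwa [map_add, coeff_X_pow_succ_mul_mk_mul, Nat.add_sub_add_right, cdeX_eq_X_mul, cdeX_eq_X_mul,
    coeff_succ_X_mul, coeff_succ_X_mul, coeff_mk, coeff_mk] at h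

theorem stmt7_general (d : ℕ) (hd : 1 ≤ d) :
    ((1 - 2 * X) * FibP (d + 2) * (CdeX d 2 - CdeX d 1) = X ^ (d + 2)) ∧
    (∀ n : ℕ, (Cde d 2 n : ℤ) = (Cde d 1 n : ℤ) +
      ∑ i ∈ Icc 1 (n - d), (2 : ℤ) ^ (i - 1) *
        ∑ α ∈ univ.filter (fun α : Composition (n - d - i) ↦ ∀ a ∈ α.blocks, 2 * a ≤ d + 1),
          (-1 : ℤ) ^ (n - d - i - α.length) *
            (α.blocks.map fun a ↦ (((d + 1 - a).choose a : ℕ) : ℤ)).prod) := by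
  refine ⟨fibP_mul_cdeX_sub d hd, fun n ↦ ?_⟩
  have h := cde_two_eq d n hd
  simp only [coeff_inv_fibP] at h
  apply Int.cast_injective (α := ℚ)
  push_cast
  simpa [List.map_map, Function.comp_def] using h

end ExplicitFormula

/-- for `d ≥ 2`, `(1-2x)·F_{d+2}(x)·(C^{d,2}(x) - C^d(x)) = x^{d+2}`
(where `C^d(x) := C^{d,1}(x)`), and for `n,d ≥ 2`,
`C^{d,2}_n = C^d_n + Σ_{i=1}^{n-d} 2^{i-1} Σ_α (-1)^{n-d-i-ℓ(α)} Π_j binom(d+1-α_j, α_j)`,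
the inner sum being over compositions `α` of `n-d-i` with `max(α) ≤ (d+1)/2`
(equivalently `2·α_j ≤ d+1` for every part). -/
theorem stmt7 (d : ℕ) (hd : 2 ≤ d) :
    ((1 - 2 * PowerSeries.X) * FibP (d + 2) * (CdeX d 2 - CdeX d 1) =
      PowerSeries.X ^ (d + 2)) ∧
    (∀ n : ℕ, 2 ≤ n →
      (Cde d 2 n : ℤ) = (Cde d 1 n : ℤ) +
        ∑ i ∈ Finset.Icc 1 (n - d), (2 : ℤ) ^ (i - 1) *
          ∑ α ∈ Finset.univ.filter
              (fun α : Composition (n - d - i) => ∀ a ∈ α.blocks, 2 * a ≤ d + 1),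
            (-1 : ℤ) ^ (n - d - i - α.length) *
              (α.blocks.map fun a => (((d + 1 - a).choose a : ℕ) : ℤ)).prod) :=
  stmt7_general d (one_le_two.trans hd) |>.imp_right fun h n _ ↦ h n
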